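/- arXiv:2103.00240 — 2 statements merged into one kernel-verified Lean document; each statement's English description precedes it below -/
import Mathlib

section
/- Let l > 0, γ > 0, p = 3/2, and let u₀ > 0 be a smooth function on [-l,l] satisfying the compatibility condition and ∂ₓₓ log u₀ > 0 on [-l,l]. If u is a global positive classical solution of the 1D logarithmic diffusion problem with initial data u₀ on [-l,l] × [0,∞), then u_min(t) ∼ t: there exist constants c, C > 0 (depending on u₀, γ, l) such that c·t ≤ u_min(t) ≤ C·t for all t ≥ 1. -/
/-!
The bounds come from comparing `u` with one explicit subsolution and one explicit supersolution,
both growing linearly in time.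

*Lower barrier* (`lower_barrier`): `(a₀ + s t) exp (β x² / 2)`. Its logarithm has second
`x`-derivative `β`, which exceeds its time derivative as soon as `s exp (β l² / 2) < β`, so `u`
cannot touch it from above at an interior point; touching at `x = ±l` is excluded if `u_x / u` there
exceeds `β l` in the outward direction. The barrier is used twice. With `β = 0` and a small negative
slope `s` it shows that `u` stays above a positive constant. Hence, for `p = 3/2`, the outward
logarithmic derivative `2 γ u ^ (1/2)` at the boundary is bounded below, which allows a fixed
`β > 0` and a fixed slope `s > 0`: linear growth from below.

*Upper barrier* (`upper_barrier`): `(a₀ + (8 l² + 1) t) / (l² - x²)²`. It is infinite at the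
boundary, so no boundary information is needed, and
`∂ₓₓ (-2 log (l² - x²)) = (4 l² + 4 x²) / (l² - x²)² ≤ 8 l² / (l² - x²)²` makes it a strict
supersolution. Evaluating at `x = 0` bounds the minimum from above.

Both comparisons look at an extremum of the ratio of `u` to the barrier over `[-l,l] × [0,T]`.
-/

/- STATEMENT 1: p = 3/2, γ > 0, log-convex initial data: any global positive classical
solution satisfies u_min(t) ∼ t, i.e. c·t ≤ u_min(t) ≤ C·t for t ≥ 1. -/

open Set Real

/-- `u` is a positive classical solution on `[-l,l] × [0,T)` of
`∂ₜu = ∂ₓₓ log u` with boundary conditions `∂ₓu(±l,t) = ±2γ u(±l,t)^p` and initial data `u₀`. -/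
def IsLogDiffSol (l γ p T : ℝ) (u₀ : ℝ → ℝ) (u : ℝ → ℝ → ℝ) : Prop :=
  ContDiffOn ℝ 2 (fun q : ℝ × ℝ => u q.1 q.2) (Icc (-l) l ×ˢ Ico 0 T) ∧
  (∀ x ∈ Icc (-l) l, ∀ t ∈ Ico (0:ℝ) T, 0 < u x t) ∧
  (∀ x ∈ Icc (-l) l, ∀ t ∈ Ioo (0:ℝ) T,
    deriv (u x) t = deriv (deriv (fun y => Real.log (u y t))) x) ∧
  (∀ t ∈ Ioo (0:ℝ) T, deriv (fun y => u y t) l = 2 * γ * u l t ^ p) ∧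
  (∀ t ∈ Ioo (0:ℝ) T, deriv (fun y => u y t) (-l) = -(2 * γ * u (-l) t ^ p)) ∧
  (∀ x ∈ Icc (-l) l, u x 0 = u₀ x)

/-- `u` is a global (`T = ∞`) positive classical solution on `[-l,l] × [0,∞)`. -/
def IsLogDiffSolGlobal (l γ p : ℝ) (u₀ : ℝ → ℝ) (u : ℝ → ℝ → ℝ) : Prop :=
  ContDiffOn ℝ 2 (fun q : ℝ × ℝ => u q.1 q.2) (Icc (-l) l ×ˢ Ici 0) ∧
  (∀ x ∈ Icc (-l) l, ∀ t ∈ Ici (0:ℝ), 0 < u x t) ∧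
  (∀ x ∈ Icc (-l) l, ∀ t ∈ Ioi (0:ℝ),
    deriv (u x) t = deriv (deriv (fun y => Real.log (u y t))) x) ∧
  (∀ t ∈ Ioi (0:ℝ), deriv (fun y => u y t) l = 2 * γ * u l t ^ p) ∧
  (∀ t ∈ Ioi (0:ℝ), deriv (fun y => u y t) (-l) = -(2 * γ * u (-l) t ^ p)) ∧
  (∀ x ∈ Icc (-l) l, u x 0 = u₀ x)

/-- The compatibility condition `∂ₓ log u₀(±l) = ±2γ u₀(±l)^{p-1}`. -/
def CompatCond (l γ p : ℝ) (u₀ : ℝ → ℝ) : Prop :=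
  deriv (fun x => Real.log (u₀ x)) l = 2 * γ * u₀ l ^ (p - 1) ∧
  deriv (fun x => Real.log (u₀ x)) (-l) = -(2 * γ * u₀ (-l) ^ (p - 1))

/-- `u_min(t) = min_{x ∈ [-l,l]} u(x,t)`. -/
noncomputable def uMin (l : ℝ) (u : ℝ → ℝ → ℝ) (t : ℝ) : ℝ :=
  sInf ((fun x => u x t) '' Icc (-l) l)

/-- `u_max(t) = max_{x ∈ [-l,l]} u(x,t)`. -/
noncomputable def uMax (l : ℝ) (u : ℝ → ℝ → ℝ) (t : ℝ) : ℝ :=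
  sSup ((fun x => u x t) '' Icc (-l) l)

/-- One-sided first-order condition at the right end of an interval on which `f` is maximal. -/
lemma deriv_nonneg_of_le_left {f : ℝ → ℝ} {f' a t : ℝ} (hat : a < t) (hf : HasDerivAt f f' t)
    (h : ∀ s ∈ Icc a t, f s ≤ f t) : 0 ≤ f' := by
  have h1 : Filter.Tendsto (slope f t) (nhdsWithin t (Iio t)) (nhds f') :=
    (hasDerivWithinAt_iff_tendsto_slope' (by simp)).1 hf.hasDerivWithinAt
  refine ge_of_tendsto h1 ?_
  filter_upwards [Ioo_mem_nhdsLT hat] with s hs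
  rw [slope_def_field]
  exact div_nonneg_of_nonpos (by linarith [h s ⟨hs.1.le, hs.2.le⟩]) (by linarith [hs.2])

/-- The second-order necessary condition for `f - g` to have a local minimum, with the derivatives
of the comparison function `g` given explicitly. -/
lemma le_deriv_deriv_of_isLocalMin {f g g' : ℝ → ℝ} {g'' x : ℝ} (hf : ContDiffAt ℝ 2 f x)
    (hg : ∀ᶠ y in nhds x, HasDerivAt g (g' y) y) (hg' : HasDerivAt g' g'' x)
    (hmin : IsLocalMin (fun y => f y - g y) x) : g'' ≤ deriv (deriv f) x := by
  by_contra hlt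
  push Not at hlt
  have hfd : ∀ᶠ y in nhds x, DifferentiableAt ℝ f y := by
    filter_upwards [hf.eventually (by simp)] with y hy
    exact hy.differentiableAt (by simp)
  have hf2 : DifferentiableAt ℝ (deriv f) x := by
    have h : ContDiffAt ℝ 1 (deriv f) x := hf.derivWithin (by norm_num)
    exact h.differentiableAt (by simp)
  have he : deriv (fun y => g y - f y) =ᶠ[nhds x] fun y => g' y - deriv f y := by
    filter_upwards [hfd, hg] with y h1 h2
    exact (h2.sub h1.hasDerivAt).deriv
  have hdd : deriv (deriv (fun y => g y - f y)) x = g'' - deriv (deriv f) x := by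
    rw [he.deriv_eq]
    exact (hg'.sub hf2.hasDerivAt).deriv
  have hmax : IsLocalMax (fun y => g y - f y) x := by
    filter_upwards [hmin] with y hy
    linarith
  have hmin2 : IsLocalMin (fun y => g y - f y) x :=
    isLocalMin_of_deriv_deriv_pos (by rw [hdd]; linarith) hmax.deriv_eq_zero
      (hg.self_of_nhds.continuousAt.sub hfd.self_of_nhds.continuousAt)
  -- A point that is both a local minimum and a local maximum has vanishing second derivative.
  have hc : (fun y => g y - f y) =ᶠ[nhds x] fun _ => g x - f x := by
    filter_upwards [hmax, hmin2] with y h1 h2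
    exact le_antisymm h1 h2
  have h0 : deriv (deriv (fun y => g y - f y)) x = 0 := by
    rw [hc.deriv.deriv_eq]
    simp
  linarith

lemma hasDerivAt_half_sq (β x : ℝ) : HasDerivAt (fun y : ℝ => β * y ^ 2 / 2) (β * x) x := by
  refine (((hasDerivAt_pow 2 x).const_mul β).div_const 2).congr_deriv ?_
  simp only [Nat.cast_ofNat, Nat.add_one_sub_one, pow_one]
  ring

section Slices

variable {l : ℝ} {u : ℝ → ℝ → ℝ}

lemma contDiffAt_slice_x
    (hC : ContDiffOn ℝ 2 (fun q : ℝ × ℝ => u q.1 q.2) (Icc (-l) l ×ˢ Ici 0))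
    {x t : ℝ} (hx : x ∈ Ioo (-l) l) (ht : 0 ≤ t) : ContDiffAt ℝ 2 (fun y => u y t) x := by
  have h : ContDiffOn ℝ 2 (fun y => u y t) (Icc (-l) l) :=
    hC.comp (f := fun y : ℝ => (y, t)) (by fun_prop) (fun y hy => ⟨hy, ht⟩)
  exact h.contDiffAt (Icc_mem_nhds hx.1 hx.2)

lemma differentiableAt_slice_t
    (hC : ContDiffOn ℝ 2 (fun q : ℝ × ℝ => u q.1 q.2) (Icc (-l) l ×ˢ Ici 0))
    {x t : ℝ} (hx : x ∈ Icc (-l) l) (ht : 0 < t) : DifferentiableAt ℝ (u x) t := by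
  have h : ContDiffOn ℝ 2 (u x) (Ici 0) :=
    hC.comp (f := fun s : ℝ => (x, s)) (by fun_prop) (fun y hy => ⟨hx, hy⟩)
  exact (h.contDiffAt (Ici_mem_nhds ht)).differentiableAt (by simp)

/-- Comparison with the subsolution `(a₀ + s t) exp (β x² / 2)`. The slope `s` may
be negative. The conclusion keeps only the value `a₀ + s t` of the barrier at `x = 0`. -/
lemma lower_barrier (hl : 0 < l)
    (hC : ContDiffOn ℝ 2 (fun q : ℝ × ℝ => u q.1 q.2) (Icc (-l) l ×ˢ Ici 0))
    (hpos : ∀ x ∈ Icc (-l) l, ∀ t ∈ Ici (0:ℝ), 0 < u x t)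
    (hpde : ∀ x ∈ Icc (-l) l, ∀ t ∈ Ioi (0:ℝ),
      deriv (u x) t = deriv (deriv (fun y => Real.log (u y t))) x)
    {β a₀ s T : ℝ} (hβ : 0 ≤ β) (hT : 0 < T) (ha : ∀ t ∈ Icc 0 T, 0 < a₀ + s * t)
    (hs : s * exp (β * l ^ 2 / 2) < β)
    (hinit : ∀ x ∈ Icc (-l) l, a₀ * exp (β * l ^ 2 / 2) < u x 0)
    (hbr : ∀ t ∈ Ioc 0 T, β * l * u l t < deriv (fun y => u y t) l)
    (hbl : ∀ t ∈ Ioc 0 T, deriv (fun y => u y t) (-l) < -(β * l * u (-l) t)) :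
    ∀ x ∈ Icc (-l) l, ∀ t ∈ Icc 0 T, a₀ + s * t ≤ u x t := by
  have hexp : ∀ x ∈ Icc (-l) l, exp (β * x ^ 2 / 2) ≤ exp (β * l ^ 2 / 2) := by
    intro x hx
    have : x ^ 2 ≤ l ^ 2 := by nlinarith [hx.1, hx.2]
    gcongr
  have hcont : ContinuousOn
      (fun q : ℝ × ℝ => log (u q.1 q.2) - β * q.1 ^ 2 / 2 - log (a₀ + s * q.2))
      (Icc (-l) l ×ˢ Icc 0 T) := by
    refine ContinuousOn.sub (ContinuousOn.sub ?_ (by fun_prop)) ?_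
    · exact (hC.continuousOn.mono (prod_mono le_rfl Icc_subset_Ici_self)).log
        fun q hq => (hpos _ hq.1 _ hq.2.1).ne'
    · exact ContinuousOn.log (by fun_prop) fun q hq => (ha _ hq.2).ne'
  obtain ⟨⟨x₀, t₀⟩, ⟨hx₀, ht₀⟩, hmin⟩ :=
    (isCompact_Icc.prod isCompact_Icc).exists_isMinOn
      ⟨(l, T), ⟨by constructor <;> simp; linarith, ⟨hT.le, le_rfl⟩⟩⟩ hcont
  simp only at hx₀ ht₀
  have hmin' : ∀ x ∈ Icc (-l) l, ∀ t ∈ Icc 0 T,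
      log (u x₀ t₀) - β * x₀ ^ 2 / 2 - log (a₀ + s * t₀)
        ≤ log (u x t) - β * x ^ 2 / 2 - log (a₀ + s * t) :=
    fun x hx t ht => isMinOn_iff.1 hmin (x, t) ⟨hx, ht⟩
  have hu0 := hpos x₀ hx₀ t₀ ht₀.1
  have ha0 := ha t₀ ht₀
  suffices hm : 0 ≤ log (u x₀ t₀) - β * x₀ ^ 2 / 2 - log (a₀ + s * t₀) by
    intro x hx t ht
    have h1 := hmin' x hx t ht
    have h2 : 0 ≤ β * x ^ 2 / 2 := by positivity
    exact (log_le_log_iff (ha t ht) (hpos x hx t ht.1)).1 (by linarith)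
  by_contra hneg
  push Not at hneg
  have hle : u x₀ t₀ < (a₀ + s * t₀) * exp (β * x₀ ^ 2 / 2) := by
    rw [← log_lt_log_iff hu0 (by positivity), log_mul ha0.ne' (exp_pos _).ne', log_exp]
    linarith
  have ht0 : 0 < t₀ := by
    rcases ht₀.1.lt_or_eq with h | h
    · exact h
    · exfalso
      subst h
      have h1 := hinit x₀ hx₀
      have h2 := hexp x₀ hx₀
      have h3 : 0 < a₀ := by simpa using ha0
      have h4 := mul_le_mul_of_nonneg_left h2 h3.le
      simp only [mul_zero, add_zero] at hle
      linarith
  rcases eq_or_ne x₀ l with hxl | hxl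
  · subst hxl
    have hb := hbr t₀ ⟨ht0, ht₀.2⟩
    have hd : DifferentiableAt ℝ (fun y => u y t₀) x₀ := by
      apply differentiableAt_of_deriv_ne_zero
      have : 0 ≤ β * x₀ * u x₀ t₀ := by positivity
      linarith
    have hq : HasDerivAt (fun y : ℝ => β * y ^ 2 / 2) (β * x₀) x₀ :=
      hasDerivAt_half_sq β x₀
    have h := deriv_nonneg_of_le_left (a := -x₀) (by linarith) (hq.sub (hd.hasDerivAt.log hu0.ne'))
      (fun y hy => by
        have := hmin' y hy t₀ ht₀
        simp only [Pi.sub_apply]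
        linarith)
    have h2 : β * x₀ < deriv (fun y => u y t₀) x₀ / u x₀ t₀ := by
      rwa [lt_div_iff₀ hu0]
    linarith
  rcases eq_or_ne x₀ (-l) with hxl' | hxl'
  · have hb := hbl t₀ ⟨ht0, ht₀.2⟩
    rw [← hxl'] at hb
    have hd : DifferentiableAt ℝ (fun y => u y t₀) x₀ := by
      apply differentiableAt_of_deriv_ne_zero
      have : 0 ≤ β * l * u x₀ t₀ := by positivity
      linarith
    have hq : HasDerivAt (fun y : ℝ => β * y ^ 2 / 2) (β * x₀) x₀ :=
      hasDerivAt_half_sq β x₀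
    have hx0 : x₀ = -l := hxl'
    have hF := hq.sub (hd.hasDerivAt.log hu0.ne')
    rw [← neg_neg x₀] at hF
    -- The reflection `y ↦ -y` turns the left end point into a right one.
    have h := deriv_nonneg_of_le_left (a := -l) (t := -x₀) (by linarith)
      (hF.scomp (-x₀) (hasDerivAt_neg (-x₀)))
      (fun y hy => by
        have := hmin' (-y) ⟨by linarith [hy.2], by linarith [hy.1]⟩ t₀ ht₀
        simp only [Pi.sub_apply, Function.comp, neg_neg]
        linarith)
    simp only [neg_neg, smul_eq_mul] at h
    have h2 : deriv (fun y => u y t₀) x₀ / u x₀ t₀ < -(β * l) := by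
      rw [div_lt_iff₀ hu0]; linarith
    have h3 : β * x₀ = -(β * l) := by rw [hx0]; ring
    linarith
  · have hxi : x₀ ∈ Ioo (-l) l :=
      ⟨lt_of_le_of_ne hx₀.1 (Ne.symm hxl'), lt_of_le_of_ne hx₀.2 hxl⟩
    have hxx : β ≤ deriv (deriv (fun y => log (u y t₀))) x₀ := by
      refine le_deriv_deriv_of_isLocalMin (g := fun y => β * y ^ 2 / 2) (g' := fun y => β * y)
        ((contDiffAt_slice_x hC hxi ht₀.1).log hu0.ne') ?_ ?_ ?_
      · exact Filter.Eventually.of_forall fun y => hasDerivAt_half_sq β y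
      · simpa using (hasDerivAt_id x₀).const_mul β
      · filter_upwards [Icc_mem_nhds hxi.1 hxi.2] with y hy
        have := hmin' y hy t₀ ht₀
        linarith
    have hdt := (differentiableAt_slice_t hC hx₀ ht0).hasDerivAt
    have hda : HasDerivAt (fun t => a₀ + s * t) s t₀ := by
      simpa using ((hasDerivAt_id t₀).const_mul s).const_add a₀
    have h := deriv_nonneg_of_le_left ht0 ((hda.log ha0.ne').sub (hdt.log hu0.ne'))
      (fun t ht => by
        have := hmin' x₀ hx₀ t ⟨ht.1, ht.2.trans ht₀.2⟩
        simp only [Pi.sub_apply]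
        linarith)
    rw [hpde x₀ hx₀ t₀ ht0] at h
    have h1 : deriv (deriv (fun y => log (u y t₀))) x₀ ≤ s / (a₀ + s * t₀) * u x₀ t₀ := by
      rw [← div_le_iff₀ hu0]; linarith
    rcases lt_or_ge s 0 with hs0 | hs0
    · have : s / (a₀ + s * t₀) * u x₀ t₀ < 0 :=
        mul_neg_of_neg_of_pos (div_neg_of_neg_of_pos hs0 ha0) hu0
      linarith
    · have h2 : s / (a₀ + s * t₀) * u x₀ t₀ ≤
          s / (a₀ + s * t₀) * ((a₀ + s * t₀) * exp (β * x₀ ^ 2 / 2)) := by gcongr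
      have h3 : s / (a₀ + s * t₀) * ((a₀ + s * t₀) * exp (β * x₀ ^ 2 / 2))
          = s * exp (β * x₀ ^ 2 / 2) := by field_simp
      have h4 := mul_le_mul_of_nonneg_left (hexp x₀ hx₀) hs0
      linarith

/-- Comparison with the supersolution `(a₀ + (8 l² + 1) t) / (l² - x²)²`. -/
lemma upper_barrier (hl : 0 < l)
    (hC : ContDiffOn ℝ 2 (fun q : ℝ × ℝ => u q.1 q.2) (Icc (-l) l ×ˢ Ici 0))
    (hpos : ∀ x ∈ Icc (-l) l, ∀ t ∈ Ici (0:ℝ), 0 < u x t)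
    (hpde : ∀ x ∈ Icc (-l) l, ∀ t ∈ Ioi (0:ℝ),
      deriv (u x) t = deriv (deriv (fun y => Real.log (u y t))) x)
    {a₀ T : ℝ} (ha₀ : 0 < a₀) (hT : 0 < T)
    (hinit : ∀ x ∈ Icc (-l) l, u x 0 * (l ^ 2 - x ^ 2) ^ 2 < a₀) :
    ∀ x ∈ Icc (-l) l, ∀ t ∈ Icc 0 T,
      u x t * (l ^ 2 - x ^ 2) ^ 2 ≤ a₀ + (8 * l ^ 2 + 1) * t := by
  have ha : ∀ t ∈ Icc 0 T, 0 < a₀ + (8 * l ^ 2 + 1) * t := fun t ht => by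
    have := ht.1
    positivity
  have hcont : ContinuousOn
      (fun q : ℝ × ℝ => u q.1 q.2 * (l ^ 2 - q.1 ^ 2) ^ 2 / (a₀ + (8 * l ^ 2 + 1) * q.2))
      (Icc (-l) l ×ˢ Icc 0 T) := by
    refine ContinuousOn.div (ContinuousOn.mul ?_ (by fun_prop)) (by fun_prop)
      fun q hq => (ha _ hq.2).ne'
    exact hC.continuousOn.mono (prod_mono le_rfl Icc_subset_Ici_self)
  obtain ⟨⟨x₀, t₀⟩, ⟨hx₀, ht₀⟩, hmax⟩ :=
    (isCompact_Icc.prod isCompact_Icc).exists_isMaxOn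
      ⟨(l, T), ⟨by constructor <;> simp; linarith, ⟨hT.le, le_rfl⟩⟩⟩ hcont
  simp only at hx₀ ht₀
  have hmax' : ∀ x ∈ Icc (-l) l, ∀ t ∈ Icc 0 T,
      u x t * (l ^ 2 - x ^ 2) ^ 2 / (a₀ + (8 * l ^ 2 + 1) * t)
        ≤ u x₀ t₀ * (l ^ 2 - x₀ ^ 2) ^ 2 / (a₀ + (8 * l ^ 2 + 1) * t₀) :=
    fun x hx t ht => isMaxOn_iff.1 hmax (x, t) ⟨hx, ht⟩
  have hu0 := hpos x₀ hx₀ t₀ ht₀.1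
  have ha0 := ha t₀ ht₀
  suffices hm : u x₀ t₀ * (l ^ 2 - x₀ ^ 2) ^ 2 / (a₀ + (8 * l ^ 2 + 1) * t₀) ≤ 1 by
    intro x hx t ht
    exact (div_le_one (ha t ht)).1 ((hmax' x hx t ht).trans hm)
  by_contra hneg
  push Not at hneg
  rw [one_lt_div ha0] at hneg
  have ht0 : 0 < t₀ := by
    rcases ht₀.1.lt_or_eq with h | h
    · exact h
    · exfalso
      subst h
      have h1 := hinit x₀ hx₀
      simp only [mul_zero, add_zero] at hneg
      linarith
  have hxi : x₀ ∈ Ioo (-l) l := by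
    have key : x₀ ^ 2 ≠ l ^ 2 := by
      intro h
      rw [h] at hneg
      simp at hneg
      linarith
    exact ⟨lt_of_le_of_ne hx₀.1 (fun h => key (by rw [← h]; ring)),
      lt_of_le_of_ne hx₀.2 (fun h => key (by rw [h]))⟩
  have hq : ∀ y ∈ Ioo (-l) l, 0 < l ^ 2 - y ^ 2 := fun y hy => by nlinarith [hy.1, hy.2]
  have hq0 := hq x₀ hxi
  have hdq : ∀ y : ℝ, HasDerivAt (fun y => l ^ 2 - y ^ 2) (-(2 * y)) y := fun y => by
    simpa using (hasDerivAt_pow 2 y).const_sub (l ^ 2)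
  have hxx : (4 * l ^ 2 + 4 * x₀ ^ 2) / (-(l ^ 2 - x₀ ^ 2) ^ 2)
      ≤ deriv (deriv (fun y => -log (u y t₀))) x₀ := by
    refine le_deriv_deriv_of_isLocalMin (g := fun y => 2 * log (l ^ 2 - y ^ 2))
      (g' := fun y => 2 * (-(2 * y) / (l ^ 2 - y ^ 2)))
      ((contDiffAt_slice_x hC hxi ht₀.1).log hu0.ne').neg ?_ ?_ ?_
    · filter_upwards [Ioo_mem_nhds hxi.1 hxi.2] with y hy
      exact ((hdq y).log (hq y hy).ne').const_mul 2
    · have h1 : HasDerivAt (fun y : ℝ => -(2 * y)) (-2) x₀ := by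
        simpa using ((hasDerivAt_id x₀).const_mul (-2))
      refine ((h1.div (hdq x₀) hq0.ne').const_mul 2).congr_deriv ?_
      have := hq0.ne'
      rw [div_neg]
      field_simp
      ring
    · filter_upwards [Ioo_mem_nhds hxi.1 hxi.2] with y hy
      have h1 := hmax' y (Ioo_subset_Icc_self hy) t₀ ht₀
      rw [div_le_div_iff_of_pos_right ha0] at h1
      have hy0 := hq y hy
      have huy := hpos y (Ioo_subset_Icc_self hy) t₀ ht₀.1
      have h2 := log_le_log (by positivity) h1
      rw [log_mul huy.ne' (by positivity), log_mul hu0.ne' (by positivity), log_pow, log_pow] at h2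
      push_cast at h2
      linarith
  have hnn : deriv (deriv (fun y => -log (u y t₀))) x₀
      = -deriv (deriv (fun y => log (u y t₀))) x₀ := by
    have : deriv (fun y => -log (u y t₀)) = fun y => -deriv (fun y => log (u y t₀)) y := by
      ext y; exact deriv.fun_neg
    rw [this, deriv.fun_neg]
  rw [hnn, ← hpde x₀ hx₀ t₀ ht0, div_neg, neg_le_neg_iff] at hxx
  have hdt := (differentiableAt_slice_t hC hx₀ ht0).hasDerivAt
  have hda : HasDerivAt (fun t => a₀ + (8 * l ^ 2 + 1) * t) (8 * l ^ 2 + 1) t₀ := by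
    simpa using ((hasDerivAt_id t₀).const_mul (8 * l ^ 2 + 1)).const_add a₀
  have h := deriv_nonneg_of_le_left ht0 ((hdt.mul_const ((l ^ 2 - x₀ ^ 2) ^ 2)).div hda ha0.ne')
    (fun t ht => hmax' x₀ hx₀ t ⟨ht.1, ht.2.trans ht₀.2⟩)
  rw [le_div_iff₀ (by positivity), zero_mul, sub_nonneg] at h
  rw [le_div_iff₀ (by positivity)] at hxx
  have hx2 : 4 * l ^ 2 + 4 * x₀ ^ 2 ≤ 8 * l ^ 2 := by linarith
  have h5 : deriv (u x₀) t₀ * (l ^ 2 - x₀ ^ 2) ^ 2 * (a₀ + (8 * l ^ 2 + 1) * t₀)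
      ≤ 8 * l ^ 2 * (a₀ + (8 * l ^ 2 + 1) * t₀) :=
    mul_le_mul_of_nonneg_right (hxx.trans hx2) ha0.le
  have h6 := mul_lt_mul_of_pos_right hneg (show 0 < 8 * l ^ 2 + 1 by positivity)
  nlinarith

end Slices

theorem uMin_grows_linearly
    (l γ : ℝ) (hl : 0 < l) (hγ : 0 < γ) (u₀ : ℝ → ℝ)
    (hu₀smooth : ContDiffOn ℝ (⊤ : ℕ∞) u₀ (Icc (-l) l))
    (hu₀pos : ∀ x ∈ Icc (-l) l, 0 < u₀ x)
    (hcompat : CompatCond l γ (3/2) u₀)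
    (hconvex : ∀ x ∈ Icc (-l) l, 0 < deriv (deriv (fun y => Real.log (u₀ y))) x)
    (u : ℝ → ℝ → ℝ) (hu : IsLogDiffSolGlobal l γ (3/2) u₀ u) :
    ∃ c > (0:ℝ), ∃ C > (0:ℝ), ∀ t ≥ (1:ℝ),
      c * t ≤ uMin l u t ∧ uMin l u t ≤ C * t := by
  obtain ⟨hC, hpos, hpde, hbr, hbl, -⟩ := hu
  have hlI : l ∈ Icc (-l) l := ⟨by linarith, le_rfl⟩
  have hlI' : -l ∈ Icc (-l) l := ⟨le_rfl, by linarith⟩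
  have h0I : (0:ℝ) ∈ Icc (-l) l := ⟨by linarith, hl.le⟩
  have hc0 : ContinuousOn (fun x => u x 0) (Icc (-l) l) :=
    hC.continuousOn.comp (f := fun x : ℝ => (x, (0:ℝ))) (by fun_prop)
      (fun x hx => ⟨hx, self_mem_Ici⟩)
  obtain ⟨m, hm, hmu⟩ : ∃ m > 0, ∀ x ∈ Icc (-l) l, m < u x 0 := by
    obtain ⟨x, hx, hxm⟩ := isCompact_Icc.exists_isMinOn ⟨l, hlI⟩ hc0
    have h := hpos x hx 0 self_mem_Ici
    refine ⟨u x 0 / 2, by linarith, fun y hy => ?_⟩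
    have h2 : u x 0 ≤ u y 0 := isMinOn_iff.1 hxm y hy
    linarith
  obtain ⟨M, hM, hMu⟩ : ∃ M > 0, ∀ x ∈ Icc (-l) l, u x 0 * (l ^ 2 - x ^ 2) ^ 2 < M := by
    obtain ⟨x, hx, hxm⟩ := isCompact_Icc.exists_isMaxOn ⟨l, hlI⟩
      (hc0.mul (g := fun x => (l ^ 2 - x ^ 2) ^ 2) (by fun_prop))
    have h := hpos x hx 0 self_mem_Ici
    refine ⟨u x 0 * (l ^ 2 - x ^ 2) ^ 2 + 1, by positivity, fun y hy => ?_⟩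
    have h2 : u y 0 * (l ^ 2 - y ^ 2) ^ 2 ≤ u x 0 * (l ^ 2 - x ^ 2) ^ 2 := isMaxOn_iff.1 hxm y hy
    linarith
  have hlow : ∀ x ∈ Icc (-l) l, ∀ t ≥ (0:ℝ), m / 2 ≤ u x t := by
    intro x hx t ht
    -- On `[0, t + 1]` the barrier decreases from `m` to `m / 2`.
    have hT : 0 < t + 1 := by linarith
    have hval : ∀ r ∈ Icc 0 (t + 1), m / 2 ≤ m + -(m / (2 * (t + 1))) * r := by
      intro r hr
      have : m / (2 * (t + 1)) * r ≤ m / (2 * (t + 1)) * (t + 1) := by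
        gcongr
        exact hr.2
      have h2 : m / (2 * (t + 1)) * (t + 1) = m / 2 := by field_simp
      linarith
    have hneg : -(m / (2 * (t + 1))) < 0 := by
      have : 0 < m / (2 * (t + 1)) := by positivity
      linarith
    have h := lower_barrier hl hC hpos hpde (β := 0) (a₀ := m) (s := -(m / (2 * (t + 1))))
      (T := t + 1) le_rfl hT (fun r hr => by linarith [hval r hr]) (by simpa using hneg)
      (by simpa using hmu)
      (fun r hr => by
        have := hpos l hlI r hr.1.le
        rw [hbr r hr.1]
        simp only [zero_mul]
        positivity)
      (fun r hr => by
        have := hpos (-l) hlI' r hr.1.le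
        rw [hbl r hr.1, neg_lt_neg_iff]
        simp only [zero_mul]
        positivity)
      x hx t ⟨ht, by linarith⟩
    linarith [hval t ⟨ht, by linarith⟩]
  -- With this `β` the barrier has outward slope `β l = γ √(m/2)`, below `2 γ √u` at `x = ±l`.
  obtain ⟨β, hβ, hβl⟩ : ∃ β > 0, β * l = γ * √(m / 2) :=
    ⟨γ * √(m / 2) / l, by positivity, by field_simp⟩
  have hflux : ∀ v ≥ m / 2, β * l * v < 2 * γ * v ^ (3 / 2 : ℝ) := by
    intro v hv
    have hv0 : 0 < v := by linarith
    have h1 : v ^ (3 / 2 : ℝ) = v * √v := by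
      rw [sqrt_eq_rpow, show (3 / 2 : ℝ) = 1 + 1 / 2 by norm_num, rpow_add hv0, rpow_one]
    have h2 : √(m / 2) ≤ √v := sqrt_le_sqrt hv
    have h3 : 0 < √(m / 2) := by positivity
    rw [h1, hβl]
    have h4 : γ * √(m / 2) * v ≤ γ * √v * v := by gcongr
    have h5 : 0 < γ * √v * v := by positivity
    linarith
  have hE : exp (-(β * l ^ 2 / 2)) * exp (β * l ^ 2 / 2) = 1 := by
    rw [← exp_add]; simp
  have hE0 := exp_pos (-(β * l ^ 2 / 2))
  refine ⟨β / 2 * exp (-(β * l ^ 2 / 2)), by positivity, (M + (8 * l ^ 2 + 1)) / l ^ 4,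
    by positivity, fun t ht => ⟨?_, ?_⟩⟩
  · have hT : 0 < t := by linarith
    refine le_csInf ⟨_, mem_image_of_mem _ h0I⟩ ?_
    rintro _ ⟨x, hx, rfl⟩
    have h := lower_barrier hl hC hpos hpde (β := β) (a₀ := m * exp (-(β * l ^ 2 / 2)))
      (s := β / 2 * exp (-(β * l ^ 2 / 2))) (T := t) hβ.le hT
      (fun r hr => by have := hr.1; positivity)
      (by rw [mul_assoc, hE]; linarith)
      (fun y hy => by rw [mul_assoc, hE, mul_one]; exact hmu y hy)
      (fun r hr => by
        rw [hbr r hr.1]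
        exact hflux _ (hlow l hlI r hr.1.le))
      (fun r hr => by
        rw [hbl r hr.1, neg_lt_neg_iff]
        exact hflux _ (hlow (-l) hlI' r hr.1.le))
      x hx t ⟨hT.le, le_rfl⟩
    have : 0 < m * exp (-(β * l ^ 2 / 2)) := by positivity
    simp only
    linarith
  · have hT : 0 < t := by linarith
    have h := upper_barrier hl hC hpos hpde hM hT hMu 0 h0I t ⟨hT.le, le_rfl⟩
    have h1 : uMin l u t ≤ u 0 t := by
      refine csInf_le ⟨0, ?_⟩ (mem_image_of_mem (fun x => u x t) h0I)
      rintro _ ⟨x, hx, rfl⟩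
      exact (hpos x hx t hT.le).le
    refine h1.trans ?_
    rw [div_mul_eq_mul_div, le_div_iff₀ (by positivity)]
    have h2 : u 0 t * (l ^ 2 - 0 ^ 2) ^ 2 = u 0 t * l ^ 4 := by ring
    rw [h2] at h
    have h3 : M ≤ M * t := le_mul_of_one_le_right hM.le ht
    linarith
end

section
/- Let l > 0, γ > 0, p = 3/2, and let u₀ > 0 be a smooth function on [-l,l] satisfying the compatibility condition and ∂ₓₓ log u₀ > 0 on [-l,l]. If u is a global positive classical solution of the 1D logarithmic diffusion problem with initial data u₀ on [-l,l] × [0,∞), then there exists c > 0 (depending on u₀, γ, l) such that u_max(t) ≥ c·t^{3/2} for all t ≥ 1, and moreover the blow-up profile is not flat: u_max(t)/u_min(t) → ∞ as t → ∞. -/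
/-!
Write `v = log u`, so that `vₜ = e^{-v} vₓₓ`, `vₓ(±l) = ±2γ e^{v/2}` and `vₓₓ = uₜ`.

*Monotonicity in time.* Since `uₜ = vₓₓ > 0` at `t = 0` and `uₜ` is continuous up to the parabolic
boundary, `u(·, h) ≥ u(·, 0)` for all small `h`. Both `u(·, · + h)` and `u` solve the problem, so a
comparison principle (`RegSol.compare`) propagates the inequality to all times, and hence `uₜ ≥ 0`
(`RegSol.s_nonneg`). No regularity beyond `C²` is needed. Consequently `v(·, t)` is convex, its
maximum `V(t)` is attained at an endpoint, and `V` is nondecreasing.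

*Growth.* The mass `M = ∫ u` over `[-l, l]` satisfies
`M' = 2γ (√u(l) + √u(-l)) ≥ 2γ e^{V/2} ≥ 2γ √(M / 2l)`, so `√M` grows at least linearly and
`u_max ≥ M / 2l ≥ c t²` (`RegSol.exp_top_lower`), which is stronger than the rate `t^{3/2}`.

*Non-flatness.* The mass `N` of the inner interval `[-l/2, l/2]` satisfies
`N' = vₓ(l/2) - vₓ(-l/2) ≤ (4/l) (V + C)` by convexity and `v ≥ v(·, 0) ≥ -C`. As `V` is
nondecreasing, `u_min(t) ≤ N(t) / l ≤ a + b t (log u_max(t) + C)`. Because `t ≤ const · √u_max` and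
`log y ≤ 4 y^{1/4}`, this gives `u_min ≤ const · u_max^{3/4}`, so
`u_max / u_min ≥ const · u_max^{1/4} ≥ k √t` (`RegSol.lower_bound_le_exp`).
-/

/- STATEMENT 2: p = 3/2, γ > 0, log-convex initial data: any global positive classical
solution satisfies u_max(t) ≥ c·t^{3/2} for t ≥ 1, and u_max(t)/u_min(t) → ∞ as t → ∞. -/

open Set Real

/-! ### The problem in logarithmic form -/

/-- The triple `v = log u`, `w = vₓ`, `s = uₜ` for a log-diffusion solution `u` with exponent
`p = 3/2` on `[-l, l] × [0, ∞)`. The derivatives are one-sided at the edges of the domain, and the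
equation `uₜ = vₓₓ`, imposed there too, is encoded by using the same `s` in `hwx` and `hvt`. The
condition `initial_pos` is the strict log-convexity of the initial datum. -/
structure RegSol (l γ : ℝ) (v w s : ℝ → ℝ → ℝ) : Prop where
  cv : ContinuousOn (fun q : ℝ × ℝ => v q.1 q.2) (Icc (-l) l ×ˢ Ici 0)
  cs : ContinuousOn (fun q : ℝ × ℝ => s q.1 q.2) (Icc (-l) l ×ˢ Ici 0)
  hvx : ∀ t ∈ Ici (0:ℝ), ∀ x ∈ Icc (-l) l,
    HasDerivWithinAt (fun y => v y t) (w x t) (Icc (-l) l) x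
  hwx : ∀ t ∈ Ici (0:ℝ), ∀ x ∈ Icc (-l) l,
    HasDerivWithinAt (fun y => w y t) (s x t) (Icc (-l) l) x
  hvt : ∀ x ∈ Icc (-l) l, ∀ t ∈ Ici (0:ℝ),
    HasDerivWithinAt (v x) (exp (-v x t) * s x t) (Ici 0) t
  bcr : ∀ t ∈ Ioi (0:ℝ), w l t = 2 * γ * exp (v l t / 2)
  bcl : ∀ t ∈ Ioi (0:ℝ), w (-l) t = -(2 * γ * exp (v (-l) t / 2))
  initial_pos : ∀ x ∈ Icc (-l) l, 0 < s x 0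

/-! ### Derivative tests at a minimum -/

theorem deriv_nonneg_of_min_left {f : ℝ → ℝ} {f' a b : ℝ} (hab : a < b)
    (hf : HasDerivWithinAt f f' (Icc a b) a) (hmin : ∀ x ∈ Icc a b, f a ≤ f x) : 0 ≤ f' := by
  have h1 : HasDerivWithinAt f f' (Ioi a) a :=
    (hf.mono_of_mem_nhdsWithin (Icc_mem_nhdsGT hab))
  rw [hasDerivWithinAt_iff_tendsto_slope' (by simp)] at h1
  refine ge_of_tendsto h1 ?_
  filter_upwards [Ioc_mem_nhdsGT hab] with x hx
  rw [slope_def_field]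
  exact div_nonneg (sub_nonneg.2 (hmin x ⟨hx.1.le, hx.2⟩)) (sub_nonneg.2 hx.1.le)

theorem deriv_nonpos_of_min_right {f : ℝ → ℝ} {f' a b : ℝ} (hab : a < b)
    (hf : HasDerivWithinAt f f' (Icc a b) b) (hmin : ∀ x ∈ Icc a b, f b ≤ f x) : f' ≤ 0 := by
  have h1 : HasDerivWithinAt f f' (Iio b) b :=
    (hf.mono_of_mem_nhdsWithin (Icc_mem_nhdsLT hab))
  rw [hasDerivWithinAt_iff_tendsto_slope' (by simp)] at h1
  refine le_of_tendsto h1 ?_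
  filter_upwards [Ico_mem_nhdsLT hab] with x hx
  rw [slope_def_field]
  exact div_nonpos_of_nonneg_of_nonpos (sub_nonneg.2 (hmin x ⟨hx.1, hx.2.le⟩))
    (sub_nonpos.2 hx.2.le)

/-- The necessary second-order condition at an interior minimum, where `g` is the derivative of `f`. -/
theorem second_deriv_nonneg_of_min {f g : ℝ → ℝ} {g' a b x : ℝ} (hx : x ∈ Ioo a b)
    (hf : ∀ y ∈ Ioo a b, HasDerivAt f (g y) y) (hg : HasDerivAt g g' x)
    (hmin : ∀ y ∈ Icc a b, f x ≤ f y) : 0 ≤ g' := by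
  have hnh : Ioo a b ∈ nhds x := Ioo_mem_nhds hx.1 hx.2
  have hlm : IsLocalMin f x := by
    filter_upwards [hnh] with y hy using hmin y ⟨hy.1.le, hy.2.le⟩
  have h0 : g x = 0 := hlm.hasDerivAt_eq_zero (hf x hx)
  by_contra! hneg
  have hd : deriv f =ᶠ[nhds x] g := by
    filter_upwards [hnh] with y hy using (hf y hy).deriv
  have hdd : deriv (deriv f) x = g' := by rw [hd.deriv_eq, hg.deriv]
  have hlM : IsLocalMax f x :=
    isLocalMax_of_deriv_deriv_neg (by rw [hdd]; exact hneg) (by rw [(hf x hx).deriv, h0])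
      (hf x hx).continuousAt
  have hc : f =ᶠ[nhds x] fun _ => f x := by
    filter_upwards [hlm, hlM] with y h1 h2 using le_antisymm h2 h1
  have : deriv f =ᶠ[nhds x] fun _ => 0 := by
    filter_upwards [hc.eventuallyEq_nhds] with y hy
    rw [hy.deriv_eq]; simp
  have h2 := this.deriv_eq
  rw [hdd] at h2
  simp at h2
  linarith

theorem hasDerivAt_gauss (α c x : ℝ) :
    HasDerivAt (fun y => exp (α * y ^ 2 + c)) (exp (α * x ^ 2 + c) * (2 * α * x)) x := by
  refine HasDerivAt.exp ?_
  have h : HasDerivAt (fun y : ℝ => y ^ 2) (2 * x) x := by simpa using hasDerivAt_pow 2 x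
  exact ((h.const_mul α).add_const c).congr_deriv (by ring)

namespace RegSol

/-! ### Comparison with time translates, and its consequences -/

variable {l γ : ℝ} {v w s : ℝ → ℝ → ℝ}

set_option maxHeartbeats 1000000 in
/-- Comparison principle for `v` and its time translate by `h`. If the difference
`d = v(·, · + h) - v` were negative somewhere, `d / e^{αx² + Kt}` would have a negative minimum. It
cannot lie on the lateral boundary when `α` beats the Lipschitz constant of the flux, nor in the
interior when `K` beats the zeroth-order terms, nor at `t = 0` by hypothesis. -/
theorem compare (H : RegSol l γ v w s) (hl : 0 < l) (hγ : 0 < γ) {h : ℝ} (hh : 0 ≤ h)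
    (h0 : ∀ x ∈ Icc (-l) l, v x 0 ≤ v x h) :
    ∀ x ∈ Icc (-l) l, ∀ t ∈ Ici (0:ℝ), v x t ≤ v x (t + h) := by
  intro x₁ hx₁ T hT
  have hT : 0 ≤ T := hT
  have hcpt : IsCompact (Icc (-l) l ×ˢ Icc (0:ℝ) (T + h)) := isCompact_Icc.prod isCompact_Icc
  have hsub : Icc (-l) l ×ˢ Icc (0:ℝ) (T + h) ⊆ Icc (-l) l ×ˢ Ici 0 :=
    prod_mono le_rfl (fun t ht => ht.1)
  obtain ⟨V, hV⟩ := hcpt.exists_bound_of_continuousOn (H.cv.mono hsub)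
  obtain ⟨B, hB⟩ := hcpt.exists_bound_of_continuousOn (H.cs.mono hsub)
  have hV' : ∀ x ∈ Icc (-l) l, ∀ t ∈ Icc (0:ℝ) (T + h), |v x t| ≤ V :=
    fun x hx t ht => hV (x, t) ⟨hx, ht⟩
  have hB' : ∀ x ∈ Icc (-l) l, ∀ t ∈ Icc (0:ℝ) (T + h), |s x t| ≤ B :=
    fun x hx t ht => hB (x, t) ⟨hx, ht⟩
  have hB0 : 0 ≤ B := (abs_nonneg _).trans (hB' x₁ hx₁ 0 ⟨le_rfl, by linarith⟩)
  -- twice what the boundary estimate needs: `2αl` must exceed `γ e^{V/2}`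
  set α : ℝ := γ * exp (V / 2) / l with hα
  have hαpos : 0 < α := by positivity
  set K : ℝ := exp V * (2 * α + 4 * α ^ 2 * l ^ 2 + B) + 1 with hK
  -- the weight whose multiple `-μ φ` touches `d` from below
  set φ : ℝ → ℝ → ℝ := fun x t => exp (α * x ^ 2 + K * t) with hφ
  have hφpos : ∀ x t, 0 < φ x t := fun x t => exp_pos _
  set d : ℝ → ℝ → ℝ := fun x t => v x (t + h) - v x t with hd
  have hcpt2 : IsCompact (Icc (-l) l ×ˢ Icc (0:ℝ) T) := isCompact_Icc.prod isCompact_Icc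
  have hgc : ContinuousOn (fun q : ℝ × ℝ => d q.1 q.2 / φ q.1 q.2) (Icc (-l) l ×ˢ Icc (0:ℝ) T) := by
    refine ContinuousOn.div (ContinuousOn.sub ?_ ?_) ?_ (fun q _ => (hφpos _ _).ne')
    · exact H.cv.comp (f := fun q : ℝ × ℝ => (q.1, q.2 + h)) (by fun_prop)
        (fun q hq => ⟨hq.1, add_nonneg hq.2.1 hh⟩)
    · exact H.cv.mono (prod_mono le_rfl (fun t ht => ht.1))
    · simp only [hφ]; fun_prop
  obtain ⟨⟨x₀, t₀⟩, ⟨hx₀, ht₀⟩, hmin⟩ := hcpt2.exists_isMinOn ⟨(x₁, T), hx₁, hT, le_rfl⟩ hgc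
  simp only at hx₀ ht₀
  set μ : ℝ := - (d x₀ t₀ / φ x₀ t₀) with hμ
  by_cases hμ0 : μ ≤ 0
  · have h1 := hmin (a := (x₁, T)) ⟨hx₁, hT, le_rfl⟩
    simp only [mem_ofPred_eq] at h1
    have h2 : 0 ≤ d x₁ T / φ x₁ T := by linarith
    have h3 : 0 ≤ d x₁ T := by
      have := mul_nonneg h2 (hφpos x₁ T).le
      rwa [div_mul_cancel₀ _ (hφpos _ _).ne'] at this
    simp only [hd] at h3
    linarith
  exfalso
  push Not at hμ0
  have hmin' : ∀ x ∈ Icc (-l) l, ∀ t ∈ Icc (0:ℝ) T, 0 ≤ d x t + μ * φ x t := by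
    intro x hx t ht
    have h1 := hmin (a := (x, t)) ⟨hx, ht⟩
    simp only [mem_ofPred_eq] at h1
    have h2 : - μ ≤ d x t / φ x t := by linarith
    rw [le_div_iff₀ (hφpos _ _)] at h2
    linarith
  have heq : d x₀ t₀ + μ * φ x₀ t₀ = 0 := by
    rw [hμ]; field_simp [(hφpos x₀ t₀).ne']; ring
  set D : ℝ := μ * φ x₀ t₀ with hD
  have hDpos : 0 < D := mul_pos hμ0 (hφpos _ _)
  have hab : v x₀ (t₀ + h) = v x₀ t₀ - D := by
    have : v x₀ (t₀ + h) - v x₀ t₀ + D = 0 := heq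
    linarith
  have ht0pos : 0 < t₀ := by
    rcases ht₀.1.eq_or_lt with h1 | h1
    · exfalso
      have := h0 x₀ hx₀
      rw [← h1, zero_add] at hab
      linarith
    · exact h1
  have hm1 : t₀ ∈ Icc (0:ℝ) (T + h) := ⟨ht₀.1, by linarith [ht₀.2]⟩
  have hm2 : t₀ + h ∈ Icc (0:ℝ) (T + h) := ⟨by linarith, by linarith [ht₀.2]⟩
  have hfx : ∀ x ∈ Icc (-l) l, HasDerivWithinAt (fun y => d y t₀ + μ * φ y t₀)
      (w x (t₀ + h) - w x t₀ + μ * (φ x t₀ * (2 * α * x))) (Icc (-l) l) x := by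
    intro x hx
    refine ((H.hvx _ hm2.1 x hx).sub (H.hvx _ hm1.1 x hx)).add (HasDerivAt.hasDerivWithinAt ?_)
    exact (hasDerivAt_gauss α (K * t₀) x).const_mul μ
  have hminx : ∀ y ∈ Icc (-l) l, d x₀ t₀ + μ * φ x₀ t₀ ≤ d y t₀ + μ * φ y t₀ := by
    intro y hy; rw [heq]; exact hmin' y hy t₀ ht₀
  -- the boundary flux difference is controlled by `D`
  have hflux : ∀ b : ℝ, |b| ≤ V → - (γ * exp (V / 2) * D) ≤ 2 * γ * (exp ((b - D) / 2) - exp (b / 2)) := by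
    intro b hb
    have h1 : exp ((b - D) / 2) = exp (b / 2) * exp (-(D / 2)) := by
      rw [← exp_add]; ring_nf
    have h2 := add_one_le_exp (-(D / 2))
    have h3 : exp (b / 2) ≤ exp (V / 2) := exp_le_exp.2 (by linarith [le_abs_self b])
    have h4 := exp_pos (b / 2)
    have h5 : - (exp (b / 2) * (D / 2)) ≤ exp (b / 2) * exp (-(D / 2)) - exp (b / 2) := by nlinarith
    have h6 : exp (b / 2) * D ≤ exp (V / 2) * D := by gcongr
    rw [h1]
    nlinarith
  have hαl : α * l = γ * exp (V / 2) := by rw [hα]; field_simp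
  have hE : 0 < γ * exp (V / 2) * D := by positivity
  rcases hx₀.2.eq_or_lt with hxl | hxl
  · subst hxl
    have h1 := deriv_nonpos_of_min_right (by linarith) (hfx _ hx₀) hminx
    rw [H.bcr _ ht0pos, H.bcr _ (by simp; linarith), hab] at h1
    have h2 := hflux (v x₀ t₀) (hV' _ hx₀ _ hm1)
    have h3 : μ * (φ x₀ t₀ * (2 * α * x₀)) = 2 * (γ * exp (V / 2) * D) := by
      rw [hD, ← hαl]; ring
    linarith
  rcases hx₀.1.eq_or_lt with hxl' | hxl'
  · have h1 := deriv_nonneg_of_min_left (by linarith) (hfx (-l) ⟨le_rfl, by linarith⟩)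
      (fun y hy => by have := hminx y hy; rwa [← hxl'] at this)
    rw [H.bcl _ ht0pos, H.bcl _ (by simp; linarith), hxl', hab] at h1
    have h2 := hflux (v x₀ t₀) (hV' _ hx₀ _ hm1)
    have h3 : μ * (φ x₀ t₀ * (2 * α * x₀)) = - (2 * (γ * exp (V / 2) * D)) := by
      rw [hD, ← hαl, ← hxl']; ring
    linarith
  -- an interior minimum: combine the second-order condition in `x` with the first-order one in `t`
  have hsec := second_deriv_nonneg_of_min (a := -l) (b := l) ⟨hxl', hxl⟩
    (f := fun y => d y t₀ + μ * φ y t₀)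
    (g := fun x => (w x (t₀ + h) - w x t₀ + μ * (φ x t₀ * (2 * α * x))))
    (g' := s x₀ (t₀ + h) - s x₀ t₀ + μ * (φ x₀ t₀ * (2 * α * x₀) * (2 * α * x₀) + φ x₀ t₀ * (2 * α)))
    (fun y hy => (hfx y ⟨hy.1.le, hy.2.le⟩).hasDerivAt (Icc_mem_nhds hy.1 hy.2))
    (by
      refine HasDerivAt.add (HasDerivAt.sub ?_ ?_) ?_
      · exact (H.hwx _ hm2.1 x₀ hx₀).hasDerivAt (Icc_mem_nhds hxl' hxl)
      · exact (H.hwx _ hm1.1 x₀ hx₀).hasDerivAt (Icc_mem_nhds hxl' hxl)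
      · refine HasDerivAt.const_mul _ (HasDerivAt.mul ?_ ?_)
        · exact hasDerivAt_gauss α (K * t₀) x₀
        · simpa using (hasDerivAt_id x₀).const_mul (2 * α))
    hminx
  have htd : HasDerivWithinAt (fun t => d x₀ t + μ * φ x₀ t)
      (exp (-v x₀ (t₀ + h)) * s x₀ (t₀ + h) - exp (-v x₀ t₀) * s x₀ t₀ + μ * (φ x₀ t₀ * K))
      (Icc 0 t₀) t₀ := by
    refine HasDerivWithinAt.add (HasDerivWithinAt.sub ?_ ?_) (HasDerivAt.hasDerivWithinAt ?_)
    · have := (H.hvt x₀ hx₀ (t₀ + h) hm2.1).hasDerivAt (Ici_mem_nhds (by linarith))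
      exact (this.comp_add_const t₀ h).hasDerivWithinAt
    · exact (H.hvt x₀ hx₀ t₀ hm1.1).mono (fun t ht => ht.1)
    · refine HasDerivAt.const_mul _ (HasDerivAt.exp ?_)
      simpa using ((hasDerivAt_id t₀).const_mul K).const_add (α * x₀ ^ 2)
  have htime := deriv_nonpos_of_min_right ht0pos htd (fun t ht => by
    rw [heq]; exact hmin' x₀ hx₀ t ⟨ht.1, ht.2.trans ht₀.2⟩)
  have h3 : μ * (φ x₀ t₀ * (2 * α * x₀) * (2 * α * x₀) + φ x₀ t₀ * (2 * α))
      = D * (2 * α + 4 * α ^ 2 * x₀ ^ 2) := by rw [hD]; ring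
  have h4 : μ * (φ x₀ t₀ * K) = D * K := by rw [hD]; ring
  rw [h3] at hsec
  rw [h4, hab] at htime
  set b := v x₀ t₀
  have hx2 : x₀ ^ 2 ≤ l ^ 2 := sq_le_sq' hxl'.le hxl.le
  have e1 : exp (-(b - D)) ≤ exp V := by
    have := hV' _ hx₀ _ hm2
    rw [hab] at this
    exact exp_le_exp.2 (by linarith [neg_abs_le (b - D)])
  have e2 : exp (-b) = exp (-(b - D)) * exp (-D) := by rw [← exp_add]; ring_nf
  have e3 := add_one_le_exp (-D)
  have e4 : exp (-D) ≤ 1 := exp_le_one_iff.2 (by linarith)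
  set a := exp (-(b - D)) with ha
  have apos : 0 < a := exp_pos _
  have hs := abs_le.1 (hB' _ hx₀ _ hm1)
  have k1 : -(D * (2 * α + 4 * α ^ 2 * l ^ 2)) ≤ s x₀ (t₀ + h) - s x₀ t₀ := by
    have : D * (2 * α + 4 * α ^ 2 * x₀ ^ 2) ≤ D * (2 * α + 4 * α ^ 2 * l ^ 2) := by gcongr
    linarith
  have k2 : -(D * B) ≤ (1 - exp (-D)) * s x₀ t₀ := by
    have : (1 - exp (-D)) * B ≤ D * B := mul_le_mul_of_nonneg_right (by linarith) hB0
    nlinarith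
  have k3 : a * (-(D * (2 * α + 4 * α ^ 2 * l ^ 2 + B))) ≤ a * (s x₀ (t₀ + h) - exp (-D) * s x₀ t₀) := by
    gcongr; nlinarith
  have k4 : a * (D * (2 * α + 4 * α ^ 2 * l ^ 2 + B)) ≤ exp V * (D * (2 * α + 4 * α ^ 2 * l ^ 2 + B)) := by
    gcongr
  rw [e2] at htime
  have k5 : D * K = exp V * (D * (2 * α + 4 * α ^ 2 * l ^ 2 + B)) + D := by rw [hK]; ring
  nlinarith

theorem s_nonneg (H : RegSol l γ v w s) (hl : 0 < l) (hγ : 0 < γ) :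
    ∀ x ∈ Icc (-l) l, ∀ t ∈ Ici (0:ℝ), 0 ≤ s x t := by
  have hstrip : ∃ τ > 0, ∀ x ∈ Icc (-l) l, ∀ t ∈ Icc (0:ℝ) τ, 0 < s x t := by
    have hcpt : IsCompact (Icc (-l) l ×ˢ Icc (0:ℝ) 1) := isCompact_Icc.prod isCompact_Icc
    have huc := hcpt.uniformContinuousOn_of_continuous
      (H.cs.mono (prod_mono le_rfl (fun t ht => ht.1)))
    obtain ⟨x₁, hx₁, hmin⟩ := isCompact_Icc.exists_isMinOn (s := Icc (-l) l)
      ⟨l, by linarith, le_rfl⟩ (f := fun x => s x 0)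
      (H.cs.comp (f := fun x : ℝ => (x, (0:ℝ))) (by fun_prop) (fun x hx => ⟨hx, mem_Ici.2 le_rfl⟩))
    obtain ⟨δ, hδ, hd⟩ := Metric.uniformContinuousOn_iff.1 huc _ (H.initial_pos x₁ hx₁)
    refine ⟨min (δ / 2) 1, by positivity, fun x hx t ht => ?_⟩
    have h1 := hd (x, t) ⟨hx, ht.1, ht.2.trans (min_le_right _ _)⟩ (x, 0)
      ⟨hx, le_rfl, zero_le_one⟩ (by
        simp only [Prod.dist_eq, dist_self, Real.dist_eq, sub_zero]
        rw [abs_of_nonneg ht.1, max_eq_right ht.1]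
        have := ht.2.trans (min_le_left _ _)
        linarith)
    have h2 : s x₁ 0 ≤ s x 0 := hmin hx
    rw [Real.dist_eq] at h1
    have := (abs_lt.1 h1).1
    simp only at this
    linarith
  obtain ⟨τ, hτ, hs⟩ := hstrip
  have hmono : ∀ x ∈ Icc (-l) l, ∀ h ∈ Icc (0:ℝ) τ, v x 0 ≤ v x h := by
    intro x hx h hh
    have : MonotoneOn (v x) (Icc 0 τ) := by
      refine monotoneOn_of_hasDerivWithinAt_nonneg (convex_Icc _ _)
        (f' := fun t => exp (-v x t) * s x t) ?_ ?_ ?_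
      · exact fun t ht => ((H.hvt x hx t ht.1).mono (fun t ht => ht.1)).continuousWithinAt
      · intro t ht
        rw [interior_Icc] at ht ⊢
        exact (H.hvt x hx t ht.1.le).mono (fun t ht => ht.1.le)
      · intro t ht
        rw [interior_Icc] at ht
        exact mul_nonneg (exp_pos _).le (hs x hx t ⟨ht.1.le, ht.2.le⟩).le
    exact this ⟨le_rfl, hτ.le⟩ hh hh.1
  intro x hx t ht
  have ht' : 0 ≤ t := ht
  have h1 := deriv_nonneg_of_min_left (a := t) (b := t + τ) (by linarith)
    ((H.hvt x hx t ht).mono (fun r hr => ht'.trans hr.1)) (fun r hr => by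
      have := H.compare hl hγ (h := r - t) (by linarith [hr.1])
        (fun y hy => hmono y hy _ ⟨by linarith [hr.1], by linarith [hr.2]⟩) x hx t ht
      simpa using this)
  exact nonneg_of_mul_nonneg_right h1 (exp_pos _)

theorem mono_time (H : RegSol l γ v w s) (hl : 0 < l) (hγ : 0 < γ) :
    ∀ x ∈ Icc (-l) l, MonotoneOn (v x) (Ici 0) := by
  intro x hx
  refine monotoneOn_of_hasDerivWithinAt_nonneg (convex_Ici _)
        (f' := fun t => exp (-v x t) * s x t) ?_ ?_ ?_
  · exact fun t ht => (H.hvt x hx t ht).continuousWithinAt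
  · intro t ht
    rw [interior_Ici] at ht ⊢
    exact (H.hvt x hx t (mem_Ici.2 (le_of_lt ht))).mono (fun t ht => mem_Ici.2 (le_of_lt ht))
  · intro t ht
    rw [interior_Ici] at ht
    exact mul_nonneg (exp_pos _).le (H.s_nonneg hl hγ x hx t (mem_Ici.2 (le_of_lt ht)))

theorem convex (H : RegSol l γ v w s) (hl : 0 < l) (hγ : 0 < γ) {t : ℝ} (ht : 0 ≤ t) :
    ConvexOn ℝ (Icc (-l) l) (fun x => v x t) := by
  refine convexOn_of_hasDerivWithinAt2_nonneg (convex_Icc _ _) (f' := fun x => w x t)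
    (f'' := fun x => s x t) ?_ ?_ ?_ ?_
  · exact fun x hx => (H.hvx t ht x hx).continuousWithinAt
  · exact fun x hx => (H.hvx t ht x (interior_subset hx)).mono interior_subset
  · exact fun x hx => (H.hwx t ht x (interior_subset hx)).mono interior_subset
  · exact fun x hx => H.s_nonneg hl hγ x (interior_subset hx) t ht

theorem continuousOn_x {f : ℝ → ℝ → ℝ}
    (hf : ContinuousOn (fun q : ℝ × ℝ => f q.1 q.2) (Icc (-l) l ×ˢ Ici 0)) {t : ℝ} (ht : 0 ≤ t) :
    ContinuousOn (fun x => f x t) (Icc (-l) l) :=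
  hf.comp (f := fun x : ℝ => (x, t)) (by fun_prop) (fun x hx => ⟨hx, mem_Ici.2 ht⟩)

/-! ### Mass balance and growth -/

/-- Conservation law: the mass on `[a, b]` changes by the flux `vₓ(b) - vₓ(a)`. -/
theorem hasDerivAt_mass (H : RegSol l γ v w s) {a b t : ℝ} (ha : -l ≤ a) (hab : a ≤ b)
    (hb : b ≤ l) (ht : 0 < t) :
    HasDerivAt (fun r => ∫ x in a..b, exp (v x r)) (w b t - w a t) t := by
  have hsub : Icc a b ⊆ Icc (-l) l := Icc_subset_Icc ha hb
  have hcpt : IsCompact (Icc (-l) l ×ˢ Icc (0:ℝ) (2 * t)) := isCompact_Icc.prod isCompact_Icc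
  obtain ⟨B, hB⟩ := hcpt.exists_bound_of_continuousOn
    (H.cs.mono (prod_mono le_rfl (fun t ht => ht.1)))
  have hcv : ∀ r, 0 ≤ r → ContinuousOn (fun x => exp (v x r)) (uIcc a b) := by
    intro r hr
    rw [uIcc_of_le hab]
    exact ((continuousOn_x H.cv hr).mono hsub).rexp
  have hcs : ContinuousOn (fun x => s x t) (uIcc a b) := by
    rw [uIcc_of_le hab]; exact (continuousOn_x H.cs ht.le).mono hsub
  have hmem : ∀ x ∈ uIoc a b, x ∈ Icc (-l) l := by
    intro x hx
    rw [uIoc_of_le hab] at hx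
    exact hsub ⟨hx.1.le, hx.2⟩
  have key := intervalIntegral.hasDerivAt_integral_of_dominated_loc_of_deriv_le
    (μ := MeasureTheory.volume) (a := a) (b := b) (x₀ := t) (s := Ioo 0 (2 * t))
    (F := fun r x => exp (v x r)) (F' := fun r x => s x r) (bound := fun _ => B)
    (Ioo_mem_nhds ht (by linarith))
    (by
      filter_upwards [Ioi_mem_nhds ht] with r hr
      exact (ContinuousOn.intervalIntegrable (hcv r (le_of_lt hr))).def'.aestronglyMeasurable)
    (hcv t ht.le).intervalIntegrable
    (ContinuousOn.intervalIntegrable hcs).def'.aestronglyMeasurable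
    (Filter.Eventually.of_forall fun x hx r hr =>
      hB (x, r) ⟨hmem x hx, hr.1.le, hr.2.le⟩)
    intervalIntegrable_const
    (Filter.Eventually.of_forall fun x hx r hr => by
      have h1 := ((H.hvt x (hmem x hx) r (mem_Ici.2 hr.1.le)).hasDerivAt (Ici_mem_nhds hr.1)).exp
      rwa [← mul_assoc, ← exp_add, add_neg_cancel, exp_zero, one_mul] at h1)
  have h_interior : ∫ x in a..b, s x t = w b t - w a t := by
    refine intervalIntegral.integral_eq_sub_of_hasDerivAt_of_le (f := fun x => w x t) hab
      ?_ ?_ hcs.intervalIntegrable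
    · exact fun x hx => ((H.hwx t (mem_Ici.2 ht.le) x (hsub hx)).continuousWithinAt).mono hsub
    · intro x hx
      exact (H.hwx t (mem_Ici.2 ht.le) x (hsub ⟨hx.1.le, hx.2.le⟩)).hasDerivAt
        (Icc_mem_nhds (by linarith [hx.1]) (by linarith [hx.2]))
  rw [← h_interior]
  exact key.2

/-- The larger of the two boundary values of `v`. -/
noncomputable def top (l : ℝ) (v : ℝ → ℝ → ℝ) (t : ℝ) : ℝ := max (v (-l) t) (v l t)

theorem le_top (H : RegSol l γ v w s) (hl : 0 < l) (hγ : 0 < γ) {t : ℝ} (ht : 0 ≤ t)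
    {x : ℝ} (hx : x ∈ Icc (-l) l) : v x t ≤ top l v t :=
  (H.convex hl hγ ht).le_max_of_mem_Icc ⟨le_rfl, by linarith⟩ ⟨by linarith, le_rfl⟩ hx

/-- Quadratic growth, from `M' ≥ 2γ √(M / 2l)` for the total mass `M`. The inequality is integrated
from time `1/2`, which avoids differentiating `M` at `t = 0`. -/
theorem exp_top_lower (H : RegSol l γ v w s) (hl : 0 < l) (hγ : 0 < γ) :
    ∃ c > 0, ∀ t ≥ (1:ℝ), c * t ^ 2 ≤ exp (top l v t) := by
  set M : ℝ → ℝ := fun t => ∫ x in (-l)..l, exp (v x t) with hM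
  have hc : ∀ t, 0 ≤ t → ContinuousOn (fun x => exp (v x t)) (Icc (-l) l) :=
    fun t ht => (continuousOn_x H.cv ht).rexp
  have hMpos : ∀ t, 0 ≤ t → 0 < M t := by
    intro t ht
    refine intervalIntegral.intervalIntegral_pos_of_pos_on ?_ (fun x _ => exp_pos _) (by linarith)
    exact ContinuousOn.intervalIntegrable (by rw [uIcc_of_le (by linarith)]; exact hc t ht)
  have hMle : ∀ t, 0 ≤ t → M t ≤ 2 * l * exp (top l v t) := by
    intro t ht
    have := intervalIntegral.integral_mono_on (a := -l) (b := l) (μ := MeasureTheory.volume)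
      (f := fun x => exp (v x t)) (g := fun _ => exp (top l v t)) (by linarith)
      (ContinuousOn.intervalIntegrable (by rw [uIcc_of_le (by linarith)]; exact hc t ht))
      intervalIntegrable_const (fun x hx => exp_le_exp.2 (H.le_top hl hγ ht hx))
    rw [intervalIntegral.integral_const, smul_eq_mul] at this
    calc M t ≤ _ := this
      _ = _ := by ring
  set κ : ℝ := γ / √(2 * l) with hκ
  have hκpos : 0 < κ := by positivity
  have hderiv : ∀ t, 0 < t → HasDerivAt M (w l t - w (-l) t) t := fun t ht =>
    H.hasDerivAt_mass le_rfl (by linarith) le_rfl ht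
  have hmono : MonotoneOn (fun t => √(M t) - κ * t) (Ici (1/2)) := by
    have hd : ∀ t, 0 < t → HasDerivAt (fun t => √(M t) - κ * t)
        ((w l t - w (-l) t) / (2 * √(M t)) - κ) t := by
      intro t ht
      refine ((hderiv t ht).sqrt (hMpos t ht.le).ne').sub ?_
      simpa using (hasDerivAt_id t).const_mul κ
    refine monotoneOn_of_hasDerivWithinAt_nonneg (convex_Ici _) ?_
      (fun t ht => (hd t ?_).hasDerivWithinAt) ?_
    · intro t ht
      have : (1/2 : ℝ) ≤ t := ht
      exact (hd t (by linarith)).continuousAt.continuousWithinAt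
    · rw [interior_Ici] at ht
      have : (1/2 : ℝ) < t := ht
      linarith
    · intro t ht
      rw [interior_Ici] at ht
      have ht2 : (1/2 : ℝ) < t := ht
      have ht0 : 0 < t := by linarith
      rw [H.bcr t ht0, H.bcl t ht0, sub_nonneg, le_div_iff₀ (by have := hMpos t ht0.le; positivity)]
      have h1 : √(M t) ≤ √(2 * l) * exp (top l v t / 2) := by
        rw [Real.sqrt_le_left (by positivity), mul_pow, Real.sq_sqrt (by positivity), ← exp_nat_mul]
        convert hMle t ht0.le using 3
        push_cast; ring
      have h2 : exp (top l v t / 2) ≤ exp (v l t / 2) + exp (v (-l) t / 2) := by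
        rcases max_choice (v (-l) t) (v l t) with h | h
        · rw [top, h]; linarith [exp_pos (v l t / 2)]
        · rw [top, h]; linarith [exp_pos (v (-l) t / 2)]
      calc κ * (2 * √(M t)) ≤ κ * (2 * (√(2 * l) * exp (top l v t / 2))) := by gcongr
        _ = 2 * γ * exp (top l v t / 2) := by rw [hκ]; field_simp
        _ ≤ 2 * γ * (exp (v l t / 2) + exp (v (-l) t / 2)) := by gcongr
        _ = _ := by ring
  refine ⟨κ ^ 2 / (8 * l), by positivity, fun t ht => ?_⟩
  have h1 := hmono (a := 1/2) (b := t) (mem_Ici.2 le_rfl) (mem_Ici.2 (by linarith)) (by linarith)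
  simp only at h1
  have h2 : κ * t / 2 ≤ √(M t) := by
    have := Real.sqrt_nonneg (M (1/2))
    nlinarith
  have h3 : (κ * t / 2) ^ 2 ≤ M t := by
    rw [← Real.sq_sqrt (hMpos t (by linarith)).le]
    gcongr
  have h4 := hMle t (by linarith)
  rw [div_mul_eq_mul_div, div_le_iff₀ (by positivity)]
  nlinarith

/-- The minimum of `u` is at most the mean over `[-l/2, l/2]`, whose flux is bounded by
convexity. -/
theorem lower_bound_le (H : RegSol l γ v w s) (hl : 0 < l) (hγ : 0 < γ) :
    ∃ a ≥ 0, ∃ b > 0, ∃ C ≥ 0, ∀ t ≥ (1:ℝ), ∀ m : ℝ, (∀ x ∈ Icc (-l) l, m ≤ exp (v x t)) →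
      m ≤ a + b * t * (top l v t + C) := by
  obtain ⟨C, hC⟩ := isCompact_Icc.exists_bound_of_continuousOn (continuousOn_x H.cv le_rfl)
  have hlmem : l ∈ Icc (-l) l := ⟨by linarith, le_rfl⟩
  have hlmem' : -l ∈ Icc (-l) l := ⟨le_rfl, by linarith⟩
  have hC0 : 0 ≤ C := (norm_nonneg _).trans (hC l hlmem)
  have hvC : ∀ x ∈ Icc (-l) l, ∀ t, 0 ≤ t → -C ≤ v x t := fun x hx t ht =>
    (abs_le.1 (hC x hx)).1.trans (H.mono_time hl hγ x hx (mem_Ici.2 le_rfl) (mem_Ici.2 ht) ht)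
  set N : ℝ → ℝ := fun t => ∫ x in (-(l/2))..(l/2), exp (v x t) with hN
  have hN0 : 0 ≤ N (1/2) :=
    intervalIntegral.integral_nonneg (by linarith) (fun x _ => (exp_pos _).le)
  refine ⟨N (1/2) / l, by positivity, 4 / l ^ 2, by positivity, C, hC0, fun t ht m hm => ?_⟩
  set B : ℝ := 4 / l * (top l v t + C) with hB
  have htop0 : 0 ≤ top l v t + C := by
    have := hvC l hlmem t (by linarith)
    have := le_max_right (v (-l) t) (v l t)
    rw [top]; linarith
  have hderiv : ∀ r, 0 < r → HasDerivAt N (w (l/2) r - w (-(l/2)) r) r := fun r hr =>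
    H.hasDerivAt_mass (by linarith) (by linarith) (by linarith) hr
  have hle : ∀ r ∈ Ioc 0 t, w (l/2) r - w (-(l/2)) r ≤ B := by
    intro r hr
    have hcv := H.convex hl hγ hr.1.le
    have m1 : l/2 ∈ Icc (-l) l := ⟨by linarith, by linarith⟩
    have m2 : -(l/2) ∈ Icc (-l) l := ⟨by linarith, by linarith⟩
    have h1 := hcv.le_slope_of_hasDerivWithinAt m1 hlmem (by linarith)
      (H.hvx r (mem_Ici.2 hr.1.le) _ m1)
    have h2 := hcv.slope_le_of_hasDerivWithinAt hlmem' m2 (by linarith)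
      (H.hvx r (mem_Ici.2 hr.1.le) _ m2)
    rw [slope_def_field] at h1 h2
    have e1 : l - l / 2 = l / 2 := by ring
    have e2 : -(l/2) - -l = l / 2 := by ring
    rw [e1, le_div_iff₀ (by positivity)] at h1
    rw [e2, div_le_iff₀ (by positivity)] at h2
    have q1 := hvC _ m1 r hr.1.le
    have q2 := hvC _ m2 r hr.1.le
    have q3 : v l r ≤ top l v t := (H.mono_time hl hγ l hlmem (mem_Ici.2 hr.1.le)
      (mem_Ici.2 (by linarith)) hr.2).trans (le_max_right _ _)
    have q4 : v (-l) r ≤ top l v t := (H.mono_time hl hγ (-l) hlmem' (mem_Ici.2 hr.1.le)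
      (mem_Ici.2 (by linarith)) hr.2).trans (le_max_left _ _)
    rw [hB, div_mul_eq_mul_div, le_div_iff₀ hl]
    nlinarith
  have hanti : AntitoneOn (fun r => N r - B * r) (Icc (1/2) t) := by
    have hd : ∀ r, 0 < r → HasDerivAt (fun r => N r - B * r) (w (l/2) r - w (-(l/2)) r - B) r := by
      intro r hr
      refine (hderiv r hr).sub ?_
      simpa using (hasDerivAt_id r).const_mul B
    refine antitoneOn_of_hasDerivWithinAt_nonpos (convex_Icc _ _) ?_
      (fun r hr => (hd r ?_).hasDerivWithinAt) ?_
    · exact fun r hr => (hd r (by linarith [hr.1])).continuousAt.continuousWithinAt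
    · rw [interior_Icc] at hr; linarith [hr.1]
    · intro r hr
      rw [interior_Icc] at hr
      have := hle r ⟨by linarith [hr.1], hr.2.le⟩
      linarith
  have h1 := hanti (a := 1/2) (b := t) ⟨le_rfl, by linarith⟩ ⟨by linarith, le_rfl⟩ (by linarith)
  simp only at h1
  have hB0 : 0 ≤ B := by positivity
  have h2 : N t ≤ N (1/2) + B * t := by linarith
  have h3 : m * l ≤ N t := by
    have hsub : Icc (-(l/2)) (l/2) ⊆ Icc (-l) l := Icc_subset_Icc (by linarith) (by linarith)
    have := intervalIntegral.integral_mono_on (a := -(l/2)) (b := l/2) (μ := MeasureTheory.volume)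
      (f := fun _ => m) (g := fun x => exp (v x t)) (by linarith)
      intervalIntegrable_const
      (ContinuousOn.intervalIntegrable (by
        rw [uIcc_of_le (by linarith)]
        exact ((continuousOn_x H.cv (by linarith)).rexp).mono hsub))
      (fun x hx => hm x (hsub hx))
    rw [intervalIntegral.integral_const, smul_eq_mul] at this
    calc m * l = (l / 2 - -(l / 2)) * m := by ring
      _ ≤ _ := this
  have h4 : m ≤ (N (1/2) + B * t) / l := by
    rw [le_div_iff₀ hl]; linarith
  refine h4.trans_eq ?_
  rw [hB]; field_simp

/-- With `y = e^{V/4}`, the two growth bounds give `m ≤ K y³` and `y ≥ e √t`, hence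
`m (e / K) √t ≤ y⁴ = e^V`. -/
theorem lower_bound_le_exp (H : RegSol l γ v w s) (hl : 0 < l) (hγ : 0 < γ) :
    ∃ k > 0, ∀ t ≥ (1:ℝ), ∀ m : ℝ, (∀ x ∈ Icc (-l) l, m ≤ exp (v x t)) →
      m * (k * √t) ≤ exp (top l v t) := by
  obtain ⟨c, hc, hlow⟩ := H.exp_top_lower hl hγ
  obtain ⟨a, ha, b, hb, C, hC, hup⟩ := H.lower_bound_le hl hγ
  -- `e ^ 4 = c`
  set e : ℝ := √√c with he
  have hepos : 0 < e := by positivity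
  have he4 : e ^ 4 = c := by
    rw [show e ^ 4 = (e ^ 2) ^ 2 by ring, he, Real.sq_sqrt (by positivity), Real.sq_sqrt hc.le]
  set K : ℝ := a / e ^ 3 + b / e ^ 2 * (4 + C / e) with hK
  have hKpos : 0 < K := by positivity
  refine ⟨e / K, by positivity, fun t ht m hm => ?_⟩
  have ht0 : 0 < t := by linarith
  set y : ℝ := exp (top l v t / 4) with hy
  have hypos : 0 < y := exp_pos _
  have hy4 : exp (top l v t) = y ^ 4 := by
    rw [hy, ← exp_nat_mul]; congr 1; push_cast; ring
  have hey : e * √t ≤ y := by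
    have h1 := hlow t ht
    rw [hy4, ← he4] at h1
    have h2 : (e * √t) ^ 4 ≤ y ^ 4 := by
      refine le_of_eq_of_le ?_ h1
      rw [mul_pow, show √t ^ 4 = (√t ^ 2) ^ 2 by ring, Real.sq_sqrt ht0.le]
    exact le_of_pow_le_pow_left₀ (by norm_num) hypos.le h2
  have hst : 1 ≤ √t := Real.one_le_sqrt.2 ht
  have hey1 : e ≤ y := by nlinarith
  have hty : t ≤ y ^ 2 / e ^ 2 := by
    rw [le_div_iff₀ (by positivity)]
    calc t * e ^ 2 = (e * √t) ^ 2 := by rw [mul_pow, Real.sq_sqrt ht0.le]; ring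
      _ ≤ y ^ 2 := by gcongr
  have htop : top l v t ≤ 4 * y := by
    have := add_one_le_exp (top l v t / 4)
    linarith
  have h1y : 1 ≤ y / e := by rw [le_div_iff₀ hepos]; linarith
  have hCy : C ≤ C / e * y := by
    calc C = C * 1 := by ring
      _ ≤ C * (y / e) := by gcongr
      _ = _ := by ring
  have hay : a ≤ a / e ^ 3 * y ^ 3 := by
    calc a = a * 1 ^ 3 := by ring
      _ ≤ a * (y / e) ^ 3 := by gcongr
      _ = _ := by rw [div_pow]; ring
  have hm3 : m ≤ K * y ^ 3 := by
    calc m ≤ a + b * t * (top l v t + C) := hup t ht m hm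
      _ ≤ a / e ^ 3 * y ^ 3 + b * t * (4 * y + C / e * y) := by gcongr
      _ ≤ a / e ^ 3 * y ^ 3 + b * (y ^ 2 / e ^ 2) * (4 * y + C / e * y) := by gcongr
      _ = K * y ^ 3 := by rw [hK]; ring
  rw [hy4]
  calc m * (e / K * √t) ≤ (K * y ^ 3) * (e / K * √t) := by gcongr
    _ = y ^ 3 * (e * √t) := by field_simp
    _ ≤ y ^ 3 * y := by gcongr
    _ = y ^ 4 := by ring

end RegSol

/-! ### From the classical solution to the logarithmic form -/

/-- A `C²` function on the closed half-strip has partial derivatives that are continuous up to the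
boundary (one-sided at the edges). -/
theorem exists_partials {l : ℝ} (hl : 0 < l) {u : ℝ → ℝ → ℝ}
    (hC : ContDiffOn ℝ 2 (fun q : ℝ × ℝ => u q.1 q.2) (Icc (-l) l ×ˢ Ici 0)) :
    ∃ ux uxx ut : ℝ → ℝ → ℝ,
      ContinuousOn (fun q : ℝ × ℝ => ux q.1 q.2) (Icc (-l) l ×ˢ Ici 0) ∧
      ContinuousOn (fun q : ℝ × ℝ => uxx q.1 q.2) (Icc (-l) l ×ˢ Ici 0) ∧
      ContinuousOn (fun q : ℝ × ℝ => ut q.1 q.2) (Icc (-l) l ×ˢ Ici 0) ∧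
      (∀ t ∈ Ici (0:ℝ), ∀ x ∈ Icc (-l) l,
        HasDerivWithinAt (fun y => u y t) (ux x t) (Icc (-l) l) x) ∧
      (∀ t ∈ Ici (0:ℝ), ∀ x ∈ Icc (-l) l,
        HasDerivWithinAt (fun y => ux y t) (uxx x t) (Icc (-l) l) x) ∧
      (∀ x ∈ Icc (-l) l, ∀ t ∈ Ici (0:ℝ),
        HasDerivWithinAt (u x) (ut x t) (Ici 0) t) := by
  set S : Set (ℝ × ℝ) := Icc (-l) l ×ˢ Ici 0 with hS
  set U : ℝ × ℝ → ℝ := fun q => u q.1 q.2 with hU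
  have hSu : UniqueDiffOn ℝ S := (uniqueDiffOn_Icc (by linarith)).prod (uniqueDiffOn_Ici 0)
  have hF : ContDiffOn ℝ 1 (fderivWithin ℝ U S) S := hC.fderivWithin hSu (by norm_num)
  have hux : ContDiffOn ℝ 1 (fun q => fderivWithin ℝ U S q (1, 0)) S :=
    hF.clm_apply contDiffOn_const
  have hut : ContDiffOn ℝ 1 (fun q => fderivWithin ℝ U S q (0, 1)) S :=
    hF.clm_apply contDiffOn_const
  have hG : ContDiffOn ℝ 0 (fderivWithin ℝ (fun q => fderivWithin ℝ U S q (1, 0)) S) S :=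
    hux.fderivWithin hSu (by norm_num)
  -- directional derivatives along the coordinate lines
  have lineX : ∀ (f : ℝ × ℝ → ℝ), DifferentiableOn ℝ f S → ∀ t ∈ Ici (0:ℝ), ∀ x ∈ Icc (-l) l,
      HasDerivWithinAt (fun y => f (y, t)) (fderivWithin ℝ f S (x, t) (1, 0)) (Icc (-l) l) x := by
    intro f hf t ht x hx
    have hmaps : MapsTo (fun y : ℝ => (y, t)) (Icc (-l) l) S := fun y hy => ⟨hy, ht⟩
    exact (hf (x, t) ⟨hx, ht⟩).hasFDerivWithinAt.comp_hasDerivWithinAt x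
      (((hasDerivAt_id x).prodMk (hasDerivAt_const x t)).hasDerivWithinAt) hmaps
  have lineT : ∀ (f : ℝ × ℝ → ℝ), DifferentiableOn ℝ f S → ∀ x ∈ Icc (-l) l, ∀ t ∈ Ici (0:ℝ),
      HasDerivWithinAt (fun r => f (x, r)) (fderivWithin ℝ f S (x, t) (0, 1)) (Ici 0) t := by
    intro f hf x hx t ht
    have hmaps : MapsTo (fun r : ℝ => (x, r)) (Ici 0) S := fun r hr => ⟨hx, hr⟩
    exact (hf (x, t) ⟨hx, ht⟩).hasFDerivWithinAt.comp_hasDerivWithinAt t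
      (((hasDerivAt_const t x).prodMk (hasDerivAt_id t)).hasDerivWithinAt) hmaps
  refine ⟨fun x t => fderivWithin ℝ U S (x, t) (1, 0),
    fun x t => fderivWithin ℝ (fun q => fderivWithin ℝ U S q (1, 0)) S (x, t) (1, 0),
    fun x t => fderivWithin ℝ U S (x, t) (0, 1),
    hux.continuousOn, (hG.clm_apply contDiffOn_const).continuousOn, hut.continuousOn, ?_, ?_, ?_⟩
  · exact lineX U (hC.differentiableOn (by norm_num))
  · exact lineX _ (hux.differentiableOn (by norm_num))
  · exact lineT U (hC.differentiableOn (by norm_num))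

/-- A global classical solution with strictly log-convex datum yields a `RegSol`. The hypotheses at
`x = ±l` use the two-sided `deriv` of functions that are uncontrolled outside `[-l, l]`; the
boundary data and the convexity are nonzero there, so those derivatives are genuine, while the
equation is only used in the interior and extended by continuity. -/
theorem exists_regSol {l γ : ℝ} (hl : 0 < l) (hγ : 0 < γ) {u₀ : ℝ → ℝ}
    (hconvex : ∀ x ∈ Icc (-l) l, 0 < deriv (deriv (fun y => Real.log (u₀ y))) x)
    {u : ℝ → ℝ → ℝ} (hu : IsLogDiffSolGlobal l γ (3/2) u₀ u) :
    ∃ w s, RegSol l γ (fun x t => Real.log (u x t)) w s := by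
  obtain ⟨hC, hpos, hpde, hbr, hbl, hinit⟩ := hu
  obtain ⟨ux, uxx, ut, cux, cuxx, cut, dx, dxx, dt⟩ := exists_partials hl hC
  have hlmem : l ∈ Icc (-l) l := ⟨by linarith, le_rfl⟩
  have hlmem' : -l ∈ Icc (-l) l := ⟨le_rfl, by linarith⟩
  have hud : UniqueDiffOn ℝ (Icc (-l) l) := uniqueDiffOn_Icc (by linarith)
  have hposS : ∀ q ∈ Icc (-l) l ×ˢ Ici (0:ℝ), u q.1 q.2 ≠ 0 :=
    fun q hq => (hpos q.1 hq.1 q.2 hq.2).ne'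
  set w : ℝ → ℝ → ℝ := fun x t => ux x t / u x t with hw
  set z : ℝ → ℝ → ℝ := fun x t => (uxx x t * u x t - ux x t * ux x t) / u x t ^ 2 with hz
  have hvx : ∀ t ∈ Ici (0:ℝ), ∀ x ∈ Icc (-l) l,
      HasDerivWithinAt (fun y => Real.log (u y t)) (w x t) (Icc (-l) l) x :=
    fun t ht x hx => (dx t ht x hx).log (hpos x hx t ht).ne'
  have hwz : ∀ t ∈ Ici (0:ℝ), ∀ x ∈ Icc (-l) l,
      HasDerivWithinAt (fun y => w y t) (z x t) (Icc (-l) l) x :=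
    fun t ht x hx => (dxx t ht x hx).div (dx t ht x hx) (hpos x hx t ht).ne'
  have cz : ContinuousOn (fun q : ℝ × ℝ => z q.1 q.2) (Icc (-l) l ×ˢ Ici 0) :=
    ContinuousOn.div ((cuxx.mul hC.continuousOn).sub (cux.mul cux)) (hC.continuousOn.pow 2)
      (fun q hq => pow_ne_zero 2 (hposS q hq))
  have h_interior : ∀ t ∈ Ici (0:ℝ), ∀ x ∈ Ioo (-l) l,
      deriv (fun y => Real.log (u y t)) x = w x t := fun t ht x hx =>
    ((hvx t ht x ⟨hx.1.le, hx.2.le⟩).hasDerivAt (Icc_mem_nhds hx.1 hx.2)).deriv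
  -- the equation holds up to the parabolic boundary, by density and continuity
  have heq : ∀ x ∈ Icc (-l) l, ∀ t ∈ Ici (0:ℝ), ut x t = z x t := by
    have hE : EqOn (fun q : ℝ × ℝ => ut q.1 q.2) (fun q => z q.1 q.2) (Ioo (-l) l ×ˢ Ioi 0) := by
      rintro ⟨x, t⟩ ⟨hx, ht⟩
      simp only at hx ht ⊢
      have ht0 : (0:ℝ) < t := ht
      have hx' : x ∈ Icc (-l) l := ⟨hx.1.le, hx.2.le⟩
      have h1 := hpde x hx' t ht
      rw [((dt x hx' t (mem_Ici.2 ht0.le)).hasDerivAt (Ici_mem_nhds ht0)).deriv] at h1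
      have h2 : deriv (fun y => Real.log (u y t)) =ᶠ[nhds x] fun y => w y t := by
        filter_upwards [Ioo_mem_nhds hx.1 hx.2] with y hy using h_interior t (mem_Ici.2 ht0.le) y hy
      rw [h1, h2.deriv_eq]
      exact ((hwz t (mem_Ici.2 ht0.le) x hx').hasDerivAt (Icc_mem_nhds hx.1 hx.2)).deriv
    have hcl : Icc (-l) l ×ˢ Ici (0:ℝ) ⊆ closure (Ioo (-l) l ×ˢ Ioi 0) := by
      rw [closure_prod_eq, closure_Ioo (by linarith), closure_Ioi]
    have := hE.of_subset_closure cut cz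
      (prod_mono Ioo_subset_Icc_self Ioi_subset_Ici_self) hcl
    exact fun x hx t ht => this (x := (x, t)) ⟨hx, ht⟩
  have hrp : ∀ a : ℝ, 0 < a → 2 * γ * a ^ ((3:ℝ)/2) / a = 2 * γ * exp (Real.log a / 2) := by
    intro a ha
    have : a ^ ((3:ℝ)/2) = a * exp (Real.log a / 2) := by
      rw [show (3:ℝ)/2 = 1 + 1/2 by norm_num, Real.rpow_add ha, Real.rpow_one,
        Real.rpow_def_of_pos ha]
      ring_nf
    rw [this]; field_simp
  -- a nonzero `deriv` is a genuine two-sided derivative, so it agrees with the one-sided one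
  have hbd : ∀ t ∈ Ioi (0:ℝ), ∀ x ∈ Icc (-l) l, deriv (fun y => u y t) x ≠ 0 →
      ux x t = deriv (fun y => u y t) x := by
    intro t ht x hx hne
    have h1 := (differentiableAt_of_deriv_ne_zero hne).hasDerivAt.hasDerivWithinAt (s := Icc (-l) l)
    exact (hud x hx).eq_deriv _ (dx t (mem_Ici.2 (le_of_lt ht)) x hx) h1
  refine ⟨w, ut, ?_, cut, hvx, ?_, ?_, ?_, ?_, ?_⟩
  · exact hC.continuousOn.log hposS
  · intro t ht x hx
    rw [heq x hx t ht]
    exact hwz t ht x hx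
  · intro x hx t ht
    have hp := hpos x hx t ht
    have := (dt x hx t ht).log hp.ne'
    rwa [exp_neg, exp_log hp, inv_mul_eq_div]
  · intro t ht
    have hp := hpos l hlmem t (mem_Ici.2 (le_of_lt ht))
    have h1 := hbr t ht
    have h2 := hbd t ht l hlmem (by rw [h1]; positivity)
    simp only [hw]
    rw [h2, h1, hrp _ hp]
  · intro t ht
    have hp := hpos (-l) hlmem' t (mem_Ici.2 (le_of_lt ht))
    have h1 := hbl t ht
    have h2 := hbd t ht (-l) hlmem' (by
      rw [h1]; exact neg_ne_zero.2 (by positivity))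
    simp only [hw]
    rw [h2, h1, neg_div, hrp _ hp]
  · intro x hx
    have h00 : (0:ℝ) ∈ Ici (0:ℝ) := mem_Ici.2 le_rfl
    set G := deriv (fun y => Real.log (u₀ y)) with hG
    have hGd : HasDerivAt G (deriv G x) x :=
      (differentiableAt_of_deriv_ne_zero (hconvex x hx).ne').hasDerivAt
    have hGw : ∀ y ∈ Ioo (-l) l, G y = w y 0 := by
      intro y hy
      rw [← h_interior 0 h00 y hy, hG]
      refine Filter.EventuallyEq.deriv_eq ?_
      filter_upwards [Ioo_mem_nhds hy.1 hy.2] with r hr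
      rw [hinit r ⟨hr.1.le, hr.2.le⟩]
    have hxcl : x ∈ closure (Ioo (-l) l) := by rwa [closure_Ioo (by linarith)]
    have hne : (nhdsWithin x (Ioo (-l) l)).NeBot := mem_closure_iff_nhdsWithin_neBot.1 hxcl
    have hw' := (hwz 0 h00 x hx).mono (Ioo_subset_Icc_self (a := -l) (b := l))
    have hG' := hGd.hasDerivWithinAt (s := Ioo (-l) l)
    have hGx : w x 0 = G x := by
      refine tendsto_nhds_unique hw'.continuousWithinAt (hG'.continuousWithinAt.congr' ?_)
      filter_upwards [self_mem_nhdsWithin] with y hy using hGw y hy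
    have h3 := hG'.congr (f₁ := fun y => w y 0) (fun y hy => (hGw y hy).symm) hGx
    have hudx : UniqueDiffWithinAt ℝ (Ioo (-l) l) x :=
      uniqueDiffWithinAt_convex (convex_Ioo _ _)
        (by rw [interior_Ioo]; exact ⟨0, by constructor <;> linarith⟩) hxcl
    rw [heq x hx 0 h00, hudx.eq_deriv _ hw' h3]
    exact hconvex x hx

theorem uMax_rate_and_nonflat_profile
    (l γ : ℝ) (hl : 0 < l) (hγ : 0 < γ) (u₀ : ℝ → ℝ)
    (hu₀smooth : ContDiffOn ℝ (⊤ : ℕ∞) u₀ (Icc (-l) l))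
    (hu₀pos : ∀ x ∈ Icc (-l) l, 0 < u₀ x)
    (hcompat : CompatCond l γ (3/2) u₀)
    (hconvex : ∀ x ∈ Icc (-l) l, 0 < deriv (deriv (fun y => Real.log (u₀ y))) x)
    (u : ℝ → ℝ → ℝ) (hu : IsLogDiffSolGlobal l γ (3/2) u₀ u) :
    (∃ c > (0:ℝ), ∀ t ≥ (1:ℝ), c * t ^ ((3:ℝ)/2) ≤ uMax l u t) ∧
    Filter.Tendsto (fun t => uMax l u t / uMin l u t) Filter.atTop Filter.atTop := by
  obtain ⟨w, s, H⟩ := exists_regSol hl hγ hconvex hu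
  have hpos := hu.2.1
  have hexp : ∀ t, 0 ≤ t → ∀ x ∈ Icc (-l) l, exp (Real.log (u x t)) = u x t :=
    fun t ht x hx => exp_log (hpos x hx t (mem_Ici.2 ht))
  have hcont : ∀ t, 0 ≤ t → ContinuousOn (fun x => u x t) (Icc (-l) l) :=
    fun t ht => RegSol.continuousOn_x hu.1.continuousOn ht
  have hmax : ∀ t, 0 ≤ t → exp (RegSol.top l (fun x t => Real.log (u x t)) t) ≤ uMax l u t := by
    intro t ht
    have hbdd := (isCompact_Icc.image_of_continuousOn (hcont t ht)).bddAbove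
    have hlmem : l ∈ Icc (-l) l := ⟨by linarith, le_rfl⟩
    have hlmem' : -l ∈ Icc (-l) l := ⟨le_rfl, by linarith⟩
    rcases max_choice (Real.log (u (-l) t)) (Real.log (u l t)) with h | h
    · rw [RegSol.top, h, hexp t ht _ hlmem']
      exact le_csSup hbdd ⟨-l, hlmem', rfl⟩
    · rw [RegSol.top, h, hexp t ht _ hlmem]
      exact le_csSup hbdd ⟨l, hlmem, rfl⟩
  have hne : (Icc (-l) l).Nonempty := ⟨0, by linarith, by linarith⟩
  have hminle : ∀ t, 0 ≤ t → ∀ x ∈ Icc (-l) l, uMin l u t ≤ u x t := by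
    intro t ht x hx
    exact csInf_le (isCompact_Icc.image_of_continuousOn (hcont t ht)).bddBelow ⟨x, hx, rfl⟩
  have hminpos : ∀ t, 0 ≤ t → 0 < uMin l u t := by
    intro t ht
    obtain ⟨x, hx, he⟩ := (isCompact_Icc.image_of_continuousOn (hcont t ht)).sInf_mem (hne.image _)
    have : uMin l u t = u x t := he.symm
    rw [this]
    exact hpos x hx t (mem_Ici.2 ht)
  constructor
  · obtain ⟨c, hc, hlow⟩ := H.exp_top_lower hl hγ
    refine ⟨c, hc, fun t ht => ?_⟩
    have h1 : t ^ ((3:ℝ)/2) ≤ t ^ 2 := by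
      rw [← Real.rpow_natCast]
      exact Real.rpow_le_rpow_of_exponent_le ht (by norm_num)
    calc c * t ^ ((3:ℝ)/2) ≤ c * t ^ 2 := by gcongr
      _ ≤ _ := hlow t ht
      _ ≤ _ := hmax t (by linarith)
  · obtain ⟨k, hk, hup⟩ := H.lower_bound_le_exp hl hγ
    refine Filter.tendsto_atTop_mono' _ ?_ (Real.tendsto_sqrt_atTop.const_mul_atTop hk)
    filter_upwards [Filter.eventually_ge_atTop 1] with t ht
    have ht0 : 0 ≤ t := by linarith
    rw [le_div_iff₀ (hminpos t ht0), mul_comm]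
    refine (hup t ht _ (fun x hx => ?_)).trans (hmax t ht0)
    rw [hexp t ht0 x hx]
    exact hminle t ht0 x hx
end
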